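/- arXiv:1807.00719 — 3 statements merged into one kernel-verified Lean document; each statement's English description precedes it below -/
import Mathlib

section
/- Let σ² > 0 and Py > 0 be real numbers and let μ be a probability measure on ℝ that is absolutely continuous with respect to the Gaussian measure gaussianReal 0 σ², such that the function y ↦ y² is integrable with respect to μ with ∫ y² dμ(y) = Py. Then the Kullback–Leibler divergence satisfies klDiv μ (gaussianReal 0 σ²) ≥ ENNReal.ofReal ((1/2) * (Py/σ² - 1 + Real.log (σ²/Py))), with equality when μ = gaussianReal 0 Py. In other words, among all distributions on ℝ with second moment Py, the zero-mean Gaussian with variance Py minimizes the KL divergence to the zero-mean Gaussian with variance σ². -/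
open MeasureTheory ProbabilityTheory
open scoped ENNReal NNReal Classical

/-- Kullback–Leibler divergence of `μ` from `ν`: `∫ log (dμ/dν) dμ` when `μ ≪ ν` and the
log-likelihood ratio is `μ`-integrable, and `∞` otherwise. -/
noncomputable def klDiv {α : Type*} [MeasurableSpace α] (μ ν : Measure α) : ℝ≥0∞ :=
  if μ ≪ ν ∧ Integrable (llr μ ν) μ then ENNReal.ofReal (∫ x, llr μ ν x ∂μ) else ⊤

/-!
The log-likelihood ratio of two Gaussian laws with the same mean `m` is affine in `(x - m) ^ 2`, so
its integral against `μ` depends on `μ` only through the second moment about `m`. By the chain rule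
`log (dμ/dκ) = log (dμ/dν) + log (dν/dκ)`, with `κ` the noise law and `ν` the Gaussian law with the
prescribed second moment, the divergence of `μ` from `κ` exceeds that of `ν` from `κ` by the
divergence of `μ` from `ν`, which is nonnegative.
-/

section KullbackLeibler

variable {α : Type*} [MeasurableSpace α] {μ ν κ : Measure α}

theorem klDiv_of_not_ac (h : ¬ μ ≪ ν) : klDiv μ ν = ⊤ :=
  if_neg fun h' ↦ h h'.1

theorem llr_ae_eq_llr_add_llr [SigmaFinite μ] [SigmaFinite ν] [SigmaFinite κ]
    (hμν : μ ≪ ν) (hμκ : μ ≪ κ) : llr μ κ =ᵐ[μ] llr μ ν + llr ν κ := by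
  filter_upwards [hμκ.ae_le (Measure.rnDeriv_mul_rnDeriv (κ := κ) hμν),
    Measure.rnDeriv_pos hμκ, hμκ.ae_le (Measure.rnDeriv_lt_top μ κ)] with x hmul hpos htop
  have hne : (μ.rnDeriv ν x).toReal * (ν.rnDeriv κ x).toReal ≠ 0 := by
    rw [← ENNReal.toReal_mul, ← Pi.mul_apply, hmul]
    exact (ENNReal.toReal_pos hpos.ne' htop.ne).ne'
  rw [Pi.add_apply, llr, llr, llr, ← hmul, Pi.mul_apply, ENNReal.toReal_mul,
    Real.log_mul (left_ne_zero_of_mul hne) (right_ne_zero_of_mul hne)]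

theorem ofReal_integral_llr_le_klDiv [IsProbabilityMeasure μ] [IsProbabilityMeasure ν]
    [SigmaFinite κ] (hμν : μ ≪ ν) (hνκ : Integrable (llr ν κ) μ) :
    ENNReal.ofReal (∫ x, llr ν κ x ∂μ) ≤ klDiv μ κ := by
  rw [klDiv]
  split_ifs with h
  · obtain ⟨hμκ, hμκ_int⟩ := h
    have hchain := llr_ae_eq_llr_add_llr hμν hμκ
    have hμν_int : Integrable (llr μ ν) μ :=
      (integrable_add_iff_integrable_left hνκ).1 (hμκ_int.congr hchain)
    have hgibbs : 0 ≤ ∫ x, llr μ ν x ∂μ := by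
      simpa using InformationTheory.integral_llr_add_sub_measure_univ_nonneg hμν hμν_int
    rw [integral_congr_ae hchain, integral_add' hμν_int hνκ]
    exact ENNReal.ofReal_le_ofReal (le_add_of_nonneg_left hgibbs)
  · exact le_top

end KullbackLeibler

theorem integrable_sub_const_sq {α : Type*} [MeasurableSpace α] {μ : Measure α} [IsFiniteMeasure μ]
    {f : α → ℝ} (hf : MemLp f 2 μ) (c : ℝ) : Integrable (fun x ↦ (f x - c) ^ 2) μ :=
  (hf.sub (memLp_const c)).integrable_sq

section Gaussian

theorem log_gaussianPDFReal (m : ℝ) {v : ℝ≥0} (hv : v ≠ 0) (x : ℝ) :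
    Real.log (gaussianPDFReal m v x) =
      -(Real.log (2 * Real.pi) + Real.log v) / 2 - (x - m) ^ 2 / (2 * v) := by
  have hv' : (0 : ℝ) < v := by positivity
  rw [gaussianPDFReal, Real.log_mul (by positivity) (by positivity), Real.log_inv,
    Real.log_sqrt (by positivity), Real.log_mul (by positivity) hv'.ne', Real.log_exp]
  ring

theorem integral_sub_sq_gaussianReal (m c : ℝ) (v : ℝ≥0) :
    ∫ x, (x - c) ^ 2 ∂gaussianReal m v = v + (m - c) ^ 2 := by
  have hL2 : MemLp (fun x ↦ x - c) 2 (gaussianReal m v) :=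
    (memLp_id_gaussianReal 2).sub (memLp_const c)
  have hvar : Var[fun x ↦ x - c; gaussianReal m v] = v := by
    rw [variance_sub_const (by fun_prop), variance_fun_id_gaussianReal]
  have hmean : ∫ x, (x - c) ∂gaussianReal m v = m - c := by
    have hL1 : Integrable (fun x ↦ x) (gaussianReal m v) :=
      (memLp_id_gaussianReal 1).integrable le_rfl
    rw [integral_sub hL1 (integrable_const c), integral_id_gaussianReal, integral_const,
      probReal_univ, one_smul]
  rw [variance_eq_sub hL2, hmean] at hvar
  exact eq_add_of_sub_eq hvar

variable (m₁ m₂ : ℝ) {v w : ℝ≥0}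

theorem gaussianReal_absolutelyContinuous_gaussianReal (hv : v ≠ 0) (hw : w ≠ 0) :
    gaussianReal m₁ v ≪ gaussianReal m₂ w :=
  (gaussianReal_absolutelyContinuous m₁ hv).trans (gaussianReal_absolutelyContinuous' m₂ hw)

theorem llr_gaussianReal_ae_eq (hv : v ≠ 0) (hw : w ≠ 0) :
    llr (gaussianReal m₁ v) (gaussianReal m₂ w) =ᵐ[volume] fun x ↦
      (1 / 2) * (Real.log (w / v) + (x - m₂) ^ 2 / w - (x - m₁) ^ 2 / v) := by
  filter_upwards [(gaussianReal_absolutelyContinuous' m₂ hw).ae_le (Measure.rnDeriv_eq_div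
    (gaussianReal_absolutelyContinuous m₁ hv) (gaussianReal_absolutelyContinuous m₂ hw)),
    rnDeriv_gaussianReal m₁ v, rnDeriv_gaussianReal m₂ w] with x hdiv hdv hdw
  rw [llr, hdiv, hdv, hdw, ENNReal.toReal_div, toReal_gaussianPDF, toReal_gaussianPDF,
    Real.log_div (gaussianPDFReal_pos m₁ v x hv).ne' (gaussianPDFReal_pos m₂ w x hw).ne',
    log_gaussianPDFReal m₁ hv, log_gaussianPDFReal m₂ hw,
    Real.log_div (NNReal.coe_ne_zero.2 hw) (NNReal.coe_ne_zero.2 hv)]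
  ring

theorem integrable_llr_gaussianReal {μ : Measure ℝ} [IsFiniteMeasure μ] (hac : μ ≪ volume)
    (hμ : MemLp id 2 μ) (hv : v ≠ 0) (hw : w ≠ 0) :
    Integrable (llr (gaussianReal m₁ v) (gaussianReal m₂ w)) μ := by
  rw [integrable_congr (hac.ae_le (llr_gaussianReal_ae_eq m₁ m₂ hv hw))]
  have hsq := integrable_sub_const_sq hμ
  exact (((integrable_const _).add ((hsq m₂).div_const _)).sub ((hsq m₁).div_const _)).const_mul _

theorem integral_llr_gaussianReal {μ : Measure ℝ} [IsProbabilityMeasure μ] (hac : μ ≪ volume)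
    (hμ : MemLp id 2 μ) (hv : v ≠ 0) (hw : w ≠ 0) :
    ∫ x, llr (gaussianReal m₁ v) (gaussianReal m₂ w) x ∂μ =
      (1 / 2) * (Real.log (w / v) + (∫ x, (x - m₂) ^ 2 ∂μ) / w - (∫ x, (x - m₁) ^ 2 ∂μ) / v) := by
  have hint₁ : Integrable (fun x ↦ (x - m₁) ^ 2 / (v : ℝ)) μ :=
    (integrable_sub_const_sq hμ m₁).div_const _
  have hint₂ : Integrable (fun x ↦ (x - m₂) ^ 2 / (w : ℝ)) μ :=
    (integrable_sub_const_sq hμ m₂).div_const _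
  rw [integral_congr_ae (hac.ae_le (llr_gaussianReal_ae_eq m₁ m₂ hv hw)), integral_const_mul,
    integral_sub (by fun_prop) hint₁, integral_add (integrable_const _) hint₂,
    integral_div, integral_div, integral_const, probReal_univ, one_smul]

theorem klDiv_gaussianReal_gaussianReal (hv : v ≠ 0) (hw : w ≠ 0) :
    klDiv (gaussianReal m₁ v) (gaussianReal m₂ w) =
      ENNReal.ofReal ((1 / 2) * ((v + (m₁ - m₂) ^ 2) / w - 1 + Real.log (w / v))) := by
  have hvol := gaussianReal_absolutelyContinuous m₁ hv
  have hL2 : MemLp id 2 (gaussianReal m₁ v) := memLp_id_gaussianReal 2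
  rw [klDiv, if_pos ⟨gaussianReal_absolutelyContinuous_gaussianReal m₁ m₂ hv hw,
    integrable_llr_gaussianReal m₁ m₂ hvol hL2 hv hw⟩,
    integral_llr_gaussianReal m₁ m₂ hvol hL2 hv hw, integral_sub_sq_gaussianReal,
    integral_sub_sq_gaussianReal, sub_self, zero_pow two_ne_zero, add_zero,
    div_self (NNReal.coe_ne_zero.2 hv)]
  congr 2
  ring

theorem klDiv_gaussianReal_le_klDiv (m : ℝ) (hv : v ≠ 0) (hw : w ≠ 0)
    {μ : Measure ℝ} [IsProbabilityMeasure μ] (hμ : MemLp id 2 μ)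
    (hmom : ∫ x, (x - m) ^ 2 ∂μ = v) :
    klDiv (gaussianReal m v) (gaussianReal m w) ≤ klDiv μ (gaussianReal m w) := by
  by_cases hac : μ ≪ gaussianReal m w
  · have hvol := hac.trans (gaussianReal_absolutelyContinuous m hw)
    have hμv := hvol.trans (gaussianReal_absolutelyContinuous' m hv)
    refine le_of_eq_of_le ?_ (ofReal_integral_llr_le_klDiv hμv
      (integrable_llr_gaussianReal m m hvol hμ hv hw))
    rw [klDiv_gaussianReal_gaussianReal m m hv hw, integral_llr_gaussianReal m m hvol hμ hv hw,
      hmom, div_self (NNReal.coe_ne_zero.2 hv), sub_self, zero_pow two_ne_zero, add_zero]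
    congr 2
    ring
  · exact le_top.trans_eq (klDiv_of_not_ac hac).symm

end Gaussian

theorem stmt_0_general (m : ℝ) {σ2 Py : ℝ≥0} (hσ : σ2 ≠ 0) (hPy : Py ≠ 0)
    {μ : Measure ℝ} [IsProbabilityMeasure μ] (hμ : MemLp id 2 μ)
    (hmom : ∫ y, (y - m) ^ 2 ∂μ = Py) :
    ENNReal.ofReal ((1 / 2) * ((Py : ℝ) / σ2 - 1 + Real.log (σ2 / Py))) ≤
        klDiv μ (gaussianReal m σ2) ∧
      klDiv (gaussianReal m Py) (gaussianReal m σ2) =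
        ENNReal.ofReal ((1 / 2) * ((Py : ℝ) / σ2 - 1 + Real.log (σ2 / Py))) := by
  have hvalue := klDiv_gaussianReal_gaussianReal m m hPy hσ
  rw [sub_self, zero_pow two_ne_zero, add_zero] at hvalue
  exact ⟨hvalue ▸ klDiv_gaussianReal_le_klDiv m hPy hσ hμ hmom, hvalue⟩

/-- Among all distributions on `ℝ` with second moment `Py`, the zero-mean Gaussian with
variance `Py` minimizes the KL divergence to the zero-mean Gaussian with variance `σ2`. -/
theorem stmt_0 (σ2 Py : ℝ≥0) (hσ : 0 < σ2) (hPy : 0 < Py)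
    (μ : Measure ℝ) [IsProbabilityMeasure μ]
    (hac : μ ≪ gaussianReal 0 σ2)
    (hint : Integrable (fun y : ℝ => y ^ 2) μ)
    (hmom : ∫ y, y ^ 2 ∂μ = (Py : ℝ)) :
    ENNReal.ofReal ((1/2) * ((Py : ℝ) / (σ2 : ℝ) - 1 + Real.log ((σ2 : ℝ) / (Py : ℝ)))) ≤
        klDiv μ (gaussianReal 0 σ2) ∧
      klDiv (gaussianReal 0 Py) (gaussianReal 0 σ2) =
        ENNReal.ofReal ((1/2) * ((Py : ℝ) / (σ2 : ℝ) - 1 + Real.log ((σ2 : ℝ) / (Py : ℝ)))) := by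
  have hμ : MemLp id 2 μ := (memLp_two_iff_integrable_sq aestronglyMeasurable_id).2 hint
  exact stmt_0_general 0 hσ.ne' hPy.ne' hμ (by simpa only [sub_zero] using hmom)
end

section
/- Let σ_w² > 0, ε > 0, and P ≥ 0 be real numbers. Let μ be a probability measure on ℝ (the law of the transmitted signal) such that y ↦ y² is integrable with respect to μ with ∫ x² dμ(x) = P, and let ν := Measure.map (fun p : ℝ × ℝ => p.1 + p.2) (μ.prod (gaussianReal 0 σ_w²)) be the law of the warden's observation under the alternative hypothesis. If the covertness constraint klDiv ν (gaussianReal 0 σ_w²) ≤ ENNReal.ofReal (2 * ε²) holds, then (1/2) * (P/σ_w² + Real.log (σ_w²/(P + σ_w²))) ≤ 2 * ε². In particular, the transmit power P is at most the unique positive solution P_x^ε of (1/2) * (P/σ_w² + log(σ_w²/(P + σ_w²))) = 2ε². -/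
open MeasureTheory ProbabilityTheory
open scoped ENNReal NNReal Classical

/-!
Exponentially tilting the reference measure `γ` by `t * X` turns Gibbs' inequality into the
Donsker–Varadhan bound `D(ν‖γ) ≥ t * E_ν X - log E_γ exp (t * X)`. For `γ = N(m, v)` and
`X = (x - m)²` the tilted measure is again Gaussian with mean `m`; choosing `t` so that its variance
is the second moment `w` of `ν` about `m` gives `D(ν‖N(m, v)) ≥ (w/v - 1 + log (v/w))/2`, which is
the divergence of `N(m, w)` from `N(m, v)`. The power of independent signal and centred noise is
additive, so the warden's observation has `w = P + σ²`.
-/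

section DonskerVaradhan

variable {α : Type*} [MeasurableSpace α] {ν γ : Measure α} [IsProbabilityMeasure ν] [SigmaFinite γ]
  {X : α → ℝ} {t : ℝ}

lemma mul_integral_sub_cgf_le_integral_llr (hνγ : ν ≪ γ) (hllr : Integrable (llr ν γ) ν)
    (hX : Integrable X ν) (ht : t ∈ integrableExpSet X γ) :
    t * ∫ x, X x ∂ν - cgf X γ t ≤ ∫ x, llr ν γ x ∂ν := by
  have : NeZero γ := ⟨fun h ↦ NeZero.ne ν (Measure.absolutelyContinuous_zero_iff.1 (h ▸ hνγ))⟩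
  have : IsProbabilityMeasure (γ.tilted (t * X ·)) := isProbabilityMeasure_tilted ht
  have gibbs := InformationTheory.integral_llr_add_sub_measure_univ_nonneg
    (hνγ.trans (absolutelyContinuous_tilted ht))
    (integrable_llr_tilted_right hνγ (hX.const_mul t) hllr ht)
  rw [integral_llr_tilted_right hνγ (hX.const_mul t) ht hllr, integral_const_mul] at gibbs
  simp only [probReal_univ] at gibbs
  rw [cgf, mgf]
  linarith

lemma ofReal_mul_integral_sub_cgf_le_klDiv (hX : Integrable X ν) (ht : t ∈ integrableExpSet X γ) :
    ENNReal.ofReal (t * ∫ x, X x ∂ν - cgf X γ t) ≤ klDiv ν γ := by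
  rw [klDiv]
  split_ifs with h
  · exact ENNReal.ofReal_le_ofReal (mul_integral_sub_cgf_le_integral_llr h.1 h.2 hX ht)
  · exact le_top

end DonskerVaradhan

section GaussianSquare

variable {m t : ℝ} {v : ℝ≥0}

open Real in
lemma gaussianPDFReal_mul_exp_mul_sub_sq (hv : v ≠ 0) (x : ℝ) :
    gaussianPDFReal m v x * exp (t * (x - m) ^ 2)
      = (√(2 * π * v))⁻¹ * exp (-((1 - 2 * t * v) / (2 * v)) * (x - m) ^ 2) := by
  rw [gaussianPDFReal, mul_assoc, ← exp_add]
  congr 2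
  field_simp
  ring

lemma mem_integrableExpSet_sub_sq_gaussianReal (ht : 2 * t * v < 1) :
    t ∈ integrableExpSet (fun x ↦ (x - m) ^ 2) (gaussianReal m v) := by
  rcases eq_or_ne v 0 with rfl | hv
  · rw [gaussianReal_zero_var]
    exact integrable_dirac (by simp)
  have hrate : 0 < (1 - 2 * t * v) / (2 * v) := div_pos (by linarith) (by positivity)
  rw [integrableExpSet, Set.mem_ofPred_eq, gaussianReal_of_var_ne_zero _ hv,
    integrable_withDensity_iff_integrable_smul' (measurable_gaussianPDF m v)
      (ae_of_all _ fun _ ↦ gaussianPDF_lt_top)]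
  simp only [toReal_gaussianPDF, smul_eq_mul, gaussianPDFReal_mul_exp_mul_sub_sq hv]
  exact ((integrable_exp_neg_mul_sq hrate).comp_sub_right m).const_mul _

lemma mgf_sub_sq_gaussianReal (ht : 2 * t * v < 1) :
    mgf (fun x ↦ (x - m) ^ 2) (gaussianReal m v) t = (√(1 - 2 * t * v))⁻¹ := by
  rcases eq_or_ne v 0 with rfl | hv
  · simp [mgf]
  have : 0 < 1 - 2 * t * v := by linarith
  simp only [mgf, integral_gaussianReal_eq_integral_smul hv, smul_eq_mul,
    gaussianPDFReal_mul_exp_mul_sub_sq hv]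
  rw [integral_const_mul,
    integral_sub_right_eq_self (fun y ↦ Real.exp (-((1 - 2 * t * v) / (2 * v)) * y ^ 2)) m,
    integral_gaussian, ← Real.sqrt_inv, ← Real.sqrt_inv, ← Real.sqrt_mul (by positivity)]
  congr 1
  field_simp

lemma cgf_sub_sq_gaussianReal (ht : 2 * t * v < 1) :
    cgf (fun x ↦ (x - m) ^ 2) (gaussianReal m v) t = -(Real.log (1 - 2 * t * v) / 2) := by
  rw [cgf, mgf_sub_sq_gaussianReal ht, Real.log_inv, Real.log_sqrt (by linarith)]

lemma ofReal_le_klDiv_gaussianReal {ν : Measure ℝ} [IsProbabilityMeasure ν] {w : ℝ} (hv : v ≠ 0)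
    (hw : 0 < w) (hint : Integrable (fun x ↦ (x - m) ^ 2) ν) (hmom : ∫ x, (x - m) ^ 2 ∂ν = w) :
    ENNReal.ofReal ((1 / 2) * (w / v - 1 + Real.log (v / w))) ≤ klDiv ν (gaussianReal m v) := by
  -- Tilting `N(m, v)` by `t * (x - m)²` gives `N(m, w)` exactly when `1/v - 2 * t = 1/w`.
  set t : ℝ := (1 / v - 1 / w) / 2
  have hvar : 1 - 2 * t * v = v / w := by
    simp only [t]
    field_simp
    ring
  have ht : 2 * t * v < 1 := by
    have : 0 < v / w := by positivity
    linarith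
  have hmean : t * w = (w / v - 1) / 2 := by
    simp only [t]
    field_simp
  have hDV := ofReal_mul_integral_sub_cgf_le_klDiv hint
    (mem_integrableExpSet_sub_sq_gaussianReal ht)
  rw [hmom, cgf_sub_sq_gaussianReal ht, hvar, hmean] at hDV
  convert hDV using 2
  ring

end GaussianSquare

lemma integral_sq_gaussianReal (m : ℝ) (v : ℝ≥0) :
    ∫ x, x ^ 2 ∂gaussianReal m v = m ^ 2 + v := by
  have h := variance_eq_sub (memLp_id_gaussianReal (μ := m) (v := v) 2)
  simp only [variance_id_gaussianReal, Pi.pow_apply, id_eq, integral_id_gaussianReal] at h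
  linarith

section Convolution

open scoped RealInnerProductSpace

variable {E : Type*} [NormedAddCommGroup E] [MeasurableSpace E] {μ ρ : Measure E}

lemma integral_norm_add_sq [InnerProductSpace ℝ E] [CompleteSpace E] [IsProbabilityMeasure ρ]
    (hρ : MemLp id 2 ρ) (x : E) :
    ∫ y, ‖x + y‖ ^ 2 ∂ρ = ‖x‖ ^ 2 + 2 * ⟪x, ∫ y, y ∂ρ⟫ + ∫ y, ‖y‖ ^ 2 ∂ρ := by
  have hid : Integrable (fun y ↦ y) ρ := hρ.integrable one_le_two
  have hinner : Integrable (fun y ↦ 2 * ⟪x, y⟫) ρ := (hid.const_inner x).const_mul 2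
  have hsq : Integrable (fun y ↦ ‖y‖ ^ 2) ρ := hρ.integrable_norm_pow two_ne_zero
  simp only [norm_add_sq_real]
  rw [integral_add ((integrable_const _).fun_add hinner) hsq,
    integral_add (integrable_const _) hinner, integral_const_mul, integral_inner hid,
    integral_const, probReal_univ, one_smul]

variable [BorelSpace E] [SecondCountableTopology E]

lemma memLp_id_conv [IsFiniteMeasure μ] [IsFiniteMeasure ρ] {p : ℝ≥0∞} (hμ : MemLp id p μ)
    (hρ : MemLp id p ρ) : MemLp id p (μ ∗ ρ) :=
  (memLp_map_measure_iff (by fun_prop) (by fun_prop)).2 ((hμ.comp_fst ρ).add (hρ.comp_snd μ))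

lemma integral_norm_sq_conv [InnerProductSpace ℝ E] [CompleteSpace E] [IsProbabilityMeasure μ]
    [IsProbabilityMeasure ρ] (hμ : MemLp id 2 μ) (hρ : MemLp id 2 ρ) :
    ∫ z, ‖z‖ ^ 2 ∂(μ ∗ ρ) = ∫ x, ‖x‖ ^ 2 ∂μ + 2 * ⟪∫ x, x ∂μ, ∫ y, y ∂ρ⟫ + ∫ y, ‖y‖ ^ 2 ∂ρ := by
  have hconv : Integrable (fun z ↦ ‖z‖ ^ 2) (μ ∗ ρ) :=
    (memLp_id_conv hμ hρ).integrable_norm_pow two_ne_zero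
  have hid : Integrable (fun x ↦ x) μ := hμ.integrable one_le_two
  have hinner : Integrable (fun x ↦ 2 * ⟪∫ y, y ∂ρ, x⟫) μ := (hid.const_inner _).const_mul 2
  have hsq : Integrable (fun x ↦ ‖x‖ ^ 2) μ := hμ.integrable_norm_pow two_ne_zero
  rw [integral_conv hconv]
  simp only [integral_norm_add_sq hρ, ← real_inner_comm _ (∫ y, y ∂ρ)]
  rw [integral_add (hsq.fun_add hinner) (integrable_const _), integral_add hsq hinner,
    integral_const_mul, integral_inner hid, integral_const, probReal_univ, one_smul]

end Convolution

/-- Power bound of Theorem 1: under the covertness constraint `D(p₁‖p₀) ≤ 2ε²`, the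
average transmit power `P` satisfies `(1/2)(P/σ² + log(σ²/(P+σ²))) ≤ 2ε²`. -/
theorem stmt_3 (σ2 : ℝ≥0) (hσ : 0 < σ2) (ε : ℝ) (hε : 0 < ε) (P : ℝ) (hP : 0 ≤ P)
    (μ : Measure ℝ) [IsProbabilityMeasure μ]
    (hint : Integrable (fun x : ℝ => x ^ 2) μ)
    (hmom : ∫ x, x ^ 2 ∂μ = P)
    (hcov : klDiv (Measure.map (fun p : ℝ × ℝ => p.1 + p.2) (μ.prod (gaussianReal 0 σ2)))
        (gaussianReal 0 σ2) ≤ ENNReal.ofReal (2 * ε ^ 2)) :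
    (1/2) * (P / (σ2 : ℝ) + Real.log ((σ2 : ℝ) / (P + (σ2 : ℝ)))) ≤ 2 * ε ^ 2 := by
  have : (0 : ℝ) < σ2 := hσ
  have hμ : MemLp id 2 μ := (memLp_two_iff_integrable_sq aestronglyMeasurable_id).2 hint
  have hγ : MemLp id 2 (gaussianReal 0 σ2) := memLp_id_gaussianReal 2
  have hobs_int : Integrable (fun y ↦ (y - 0) ^ 2) (μ ∗ gaussianReal 0 σ2) := by
    simpa using (memLp_id_conv hμ hγ).integrable_sq
  have hobs_mom : ∫ y, (y - 0) ^ 2 ∂(μ ∗ gaussianReal 0 σ2) = P + σ2 := by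
    simpa [hmom, integral_sq_gaussianReal] using integral_norm_sq_conv hμ hγ
  have hkl := (ofReal_le_klDiv_gaussianReal hσ.ne' (by positivity) hobs_int hobs_mom).trans hcov
  rw [ENNReal.ofReal_le_ofReal_iff (by positivity)] at hkl
  convert hkl using 3
  field_simp
  ring
end

section
/- Let σ² and Py be real numbers with 0 < σ² < Py. Then there do not exist real numbers a and b such that for all y : ℝ, gaussianPDFReal 0 σ² y = (a + b * y²) * gaussianPDFReal 0 Py y. That is, the likelihood ratio p₀(y)/p₁(y) of the two zero-mean Gaussian densities with distinct variances cannot be written in the form a + b·y². -/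
open MeasureTheory ProbabilityTheory
open scoped ENNReal NNReal

/-!
Two nowhere vanishing functions whose logarithmic derivatives are polynomials `s` and `t` can
differ by a polynomial factor `p` only if `s = t`: differentiating `f = p * g` gives
`p' = (s - t) * p`, and comparing degrees forces `s - t = 0`. For a Gaussian density the
logarithmic derivative is the affine score `(m - x) / v`, which determines both the mean and the
variance.
-/

open Polynomial

lemma eq_zero_of_derivative_eq_mul_self {R : Type*} [Semiring R] [NoZeroDivisors R] {p r : R[X]}
    (hp : p ≠ 0) (h : derivative p = r * p) : r = 0 := by
  by_contra hr
  have hlt : (r * p).degree < p.degree := by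
    rw [← h]
    exact degree_derivative_lt hp
  have hle : p.degree ≤ (r * p).degree := by
    rw [degree_mul]
    exact le_add_of_nonneg_left (zero_le_degree_iff.mpr hr)
  exact hlt.not_ge hle

section PolynomialLogDeriv

variable {𝕜 : Type*} [NontriviallyNormedField 𝕜] {f g : 𝕜 → 𝕜} {p s t : 𝕜[X]}

lemma derivative_eq_sub_mul_of_eq_eval_mul
    (hf : ∀ x, HasDerivAt f (s.eval x * f x) x) (hg : ∀ x, HasDerivAt g (t.eval x * g x) x)
    (hg₀ : ∀ x, g x ≠ 0) (h : ∀ x, f x = p.eval x * g x) :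
    derivative p = (s - t) * p := by
  refine Polynomial.funext fun x ↦ mul_right_cancel₀ (hg₀ x) ?_
  have hprod : HasDerivAt f ((derivative p).eval x * g x + p.eval x * (t.eval x * g x)) x :=
    funext h ▸ (p.hasDerivAt x).mul (hg x)
  have hderiv := (hf x).unique hprod
  rw [h x] at hderiv
  simp only [eval_mul, eval_sub]
  linear_combination -hderiv

lemma eq_of_hasDerivAt_eval_mul_of_eq_eval_mul
    (hf : ∀ x, HasDerivAt f (s.eval x * f x) x) (hg : ∀ x, HasDerivAt g (t.eval x * g x) x)
    (hg₀ : ∀ x, g x ≠ 0) (hp : p ≠ 0) (h : ∀ x, f x = p.eval x * g x) :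
    s = t :=
  sub_eq_zero.mp <| eq_zero_of_derivative_eq_mul_self hp <|
    derivative_eq_sub_mul_of_eq_eval_mul hf hg hg₀ h

end PolynomialLogDeriv

/-- The score `(m - x) / v` of the Gaussian with mean `m` and variance `v`, i.e. the logarithmic
derivative of its density in the space variable `x`, encoded as a polynomial. For `v = 0` it is
`0`. -/
noncomputable def gaussianScore (m : ℝ) (v : ℝ≥0) : ℝ[X] :=
  C (v : ℝ)⁻¹ * (C m - X)

lemma hasDerivAt_gaussianPDFReal (m : ℝ) (v : ℝ≥0) (x : ℝ) :
    HasDerivAt (gaussianPDFReal m v) ((gaussianScore m v).eval x * gaussianPDFReal m v x) x := by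
  have hexponent : HasDerivAt (fun y ↦ -(y - m) ^ 2 / (2 * (v : ℝ))) ((v : ℝ)⁻¹ * (m - x)) x := by
    convert! (((hasDerivAt_id x).sub_const m).pow 2).neg.div_const (2 * (v : ℝ)) using 1
    simp only [Nat.cast_ofNat, id_eq, Nat.add_one_sub_one, pow_one, mul_one]
    ring
  convert! hexponent.exp.const_mul (√(2 * Real.pi * v))⁻¹ using 1
  simp only [gaussianScore, gaussianPDFReal, eval_mul, eval_C, eval_sub, eval_X]
  ring

lemma gaussianScore_inj {m n : ℝ} {v w : ℝ≥0} (hv : v ≠ 0) :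
    gaussianScore m v = gaussianScore n w ↔ m = n ∧ v = w := by
  refine ⟨fun h ↦ ?_, fun ⟨hm, hvw⟩ ↦ hm ▸ hvw ▸ rfl⟩
  obtain rfl : v = w := by simpa [gaussianScore] using congrArg (coeff · 1) h
  have hmean : m = n := by simpa [gaussianScore, hv] using congrArg (coeff · 0) h
  exact ⟨hmean, rfl⟩

theorem stmt_12_general {m n : ℝ} {v w : ℝ≥0} (hv : v ≠ 0) (hw : w ≠ 0) (hne : (m, v) ≠ (n, w)) :
    ¬ ∃ p : ℝ[X], ∀ y, gaussianPDFReal m v y = p.eval y * gaussianPDFReal n w y := by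
  rintro ⟨p, h⟩
  have hp : p ≠ 0 := by
    rintro rfl
    exact (gaussianPDFReal_pos m v 0 hv).ne' (by simpa only [eval_zero, zero_mul] using h 0)
  have hscore : gaussianScore m v = gaussianScore n w :=
    eq_of_hasDerivAt_eval_mul_of_eq_eval_mul (hasDerivAt_gaussianPDFReal m v)
      (hasDerivAt_gaussianPDFReal n w) (fun y ↦ (gaussianPDFReal_pos n w y hw).ne') hp h
  exact hne (Prod.ext_iff.mpr ((gaussianScore_inj hv).mp hscore))

/-- The likelihood ratio `p₀(y)/p₁(y)` of two zero-mean Gaussian densities with distinct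
variances `σ² < Py` cannot be written in the form `a + b·y²`. -/
theorem stmt_12 (σ2 Py : ℝ≥0) (hσ : 0 < σ2) (hlt : σ2 < Py) :
    ¬ ∃ a b : ℝ, ∀ y : ℝ,
      gaussianPDFReal 0 σ2 y = (a + b * y ^ 2) * gaussianPDFReal 0 Py y := by
  rintro ⟨a, b, h⟩
  exact stmt_12_general hσ.ne' (hσ.trans hlt).ne' (by simp [hlt.ne])
    ⟨C a + C b * X ^ 2, by simpa using h⟩
end
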